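/- Let n ≥ 5 be an odd integer. Let R ∈ SL₂(ℝ) be the rotation matrix ((cos(π/n), −sin(π/n)), (sin(π/n), cos(π/n))) and let T ∈ SL₂(ℝ) be the matrix ((1, 2(cos(π/n)+cos(π/4))/sin(π/n)), (0, 1)). Then the subgroup of PSL₂(ℝ) generated by the images of R and T is discrete and is isomorphic, as an abstract group, to the free product (ℤ/nℤ) ∗ (ℤ/4ℤ); that is, R and T generate the Fuchsian triangle group Δ(4,n,∞). -/

import Mathlib

/-!
Write `c = cos (π / n)`, `s = sin (π / n)`. The rotation `R` has order `n` in `PSL₂(ℝ)`. The product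
`S = R T⁻¹` has trace `2 c - s * (2 (c + cos (π / 4)) / s) = -√2`, so by Cayley–Hamilton
`S⁴ = -1`, and `S` has order `4` in `PSL₂(ℝ)`. Since `T = S⁻¹ R`, the group is generated by `R` and
`S`, and it remains to see that it is their free product and discrete.

Both `R` and `S` send the boundary point `∞` to `c / s`. The two points `∞` and `c / s` cut the
projective line into two arcs; nontrivial powers of `R` send the arc `(c / s, ∞)` into the other one
(`R_pingPong`), and nontrivial powers of `S` send the other one into `(c / s, ∞)` (`S_pingPong`).
With `e = (1, 0)` and `R e = S e` as a basis of the plane, both facts are sign computations: the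
coordinates of a vector in this basis have the same sign exactly on the first arc.

The ping-pong is played on `PSL₂(ℝ)` itself, acting by left translation, on the open sets of those
`g` for which `g∞` lies in one arc or the other; these are given by the sign of `pslForm`.
`pingPong_nhds` yields a neighbourhood of `1` that meets the image of no nontrivial reduced word,
which gives injectivity and discreteness at once. The reason: a reduced word whose first and last
letters come from the same factor exchanges the two arcs, and any other one sends an arc into
a single translate `h P` with `h ≠ 1`; near `1` neither can happen, because each factor
has at least two nontrivial elements, whose translates of `P` are disjoint.
-/

open Real Matrix MatrixGroups

noncomputable section

/-- Topology on `SL(2, ℝ)` induced from the matrix topology. -/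
instance : TopologicalSpace SL(2, ℝ) :=
  TopologicalSpace.induced (fun A => (A : Matrix (Fin 2) (Fin 2) ℝ)) inferInstance

/-- `PSL₂(ℝ)`: the quotient of `SL₂(ℝ)` by its center `{±1}`, with the quotient topology. -/
abbrev PSL2R : Type := SL(2, ℝ) ⧸ Subgroup.center SL(2, ℝ)

/-! ### Cyclic groups and ping-pong -/

/-- The hom `ℤ/m → G` sending the generator to an element `g` with `g ^ m = 1`. -/
def zmodPowHom {G : Type*} [Group G] (m : ℕ) (g : G) (hg : g ^ m = 1) :
    Multiplicative (ZMod m) →* G :=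
  AddMonoidHom.toMultiplicativeLeft
    (ZMod.lift m ⟨zmultiplesHom (Additive G) (Additive.ofMul g), by
      rw [zmultiplesHom_apply, natCast_zsmul, ← ofMul_pow, hg, ofMul_one]⟩)

theorem zmodPowHom_intCast {G : Type*} [Group G] (m : ℕ) (g : G) (hg : g ^ m = 1) (k : ℤ) :
    zmodPowHom m g hg (Multiplicative.ofAdd (k : ZMod m)) = g ^ k := by
  simp [zmodPowHom]

theorem zmodPowHom_natCast {G : Type*} [Group G] (m : ℕ) (g : G) (hg : g ^ m = 1) (k : ℕ) :
    zmodPowHom m g hg (Multiplicative.ofAdd (k : ZMod m)) = g ^ k := by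
  have := zmodPowHom_intCast m g hg k
  simpa using this

theorem exists_natCast_of_ne_one {m : ℕ} [NeZero m] (x : Multiplicative (ZMod m)) (hx : x ≠ 1) :
    ∃ k : ℕ, 1 ≤ k ∧ k < m ∧ x = Multiplicative.ofAdd (k : ZMod m) := by
  refine ⟨(Multiplicative.toAdd x).val, ?_, ZMod.val_lt _, ?_⟩
  · rw [Nat.one_le_iff_ne_zero, Ne, ZMod.val_eq_zero]
    exact hx
  · rw [ZMod.natCast_zmod_val]
    rfl

open Monoid in
theorem neWord_head_ne_one {H : Bool → Type} [∀ i, Group (H i)] {i j : Bool}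
    (w : CoprodI.NeWord H i j) : w.head ≠ 1 := by
  induction w with
  | singleton x hx => exact hx
  | append _ _ _ ih _ => exact ih

open Monoid in
/-- In a ping-pong configuration, a reduced word sends the set `P j` attached to its last letter
into the translate of `P i` by its first letter. -/
theorem neWord_pingPong {G : Type*} [Group G] {H : Bool → Type} [∀ i, Group (H i)]
    (f : ∀ i, H i →* G) (P : Bool → Set G)
    (hpp : ∀ i (h : H i), h ≠ 1 → ∀ g ∈ P i, f i h * g ∈ P (!i))
    {i j : Bool} (w : CoprodI.NeWord H i j) :
    ∀ g ∈ P j, (f i w.head)⁻¹ * CoprodI.lift f w.prod * g ∈ P i := by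
  induction w with
  | singleton x hx =>
    intro g hg
    simpa using hg
  | @append i j k l w₁ hne w₂ ih₁ ih₂ =>
    intro g hg
    have h₂ := hpp k w₂.head (neWord_head_ne_one w₂) _ (ih₂ g hg)
    have hk : (!k) = j := by cases k <;> cases j <;> simp_all
    rw [hk] at h₂
    have h₁ := ih₁ _ h₂
    simpa [mul_assoc] using h₁

open Monoid in
/-- Ping-pong with open sets in a topological group acting on itself by left translation: besides
the identity, no reduced word has its image in a suitable neighbourhood of `1`. Membership in this
neighbourhood prevents a word from exchanging the two sets, and also from sending two points of
different translates of one set into a common translate. -/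
theorem pingPong_nhds {G : Type*} [Group G] [TopologicalSpace G] [IsTopologicalGroup G]
    {H : Bool → Type} [∀ i, Group (H i)]
    (f : ∀ i, H i →* G) (P : Bool → Set G)
    (hopen : ∀ i, IsOpen (P i)) (hne : ∀ i, (P i).Nonempty)
    (hdisj : ∀ i, Disjoint (P i) (P (!i)))
    (hpp : ∀ i (h : H i), h ≠ 1 → ∀ g ∈ P i, f i h * g ∈ P (!i))
    (a b : ∀ i, H i) (ha : ∀ i, a i ≠ 1) (hb : ∀ i, b i ≠ 1) (hab : ∀ i, a i ≠ b i) :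
    ∃ U : Set G, IsOpen U ∧ 1 ∈ U ∧ ∀ w : CoprodI H, CoprodI.lift f w ∈ U → w = 1 := by
  classical
  choose p hp using hne
  -- `V i c` holds the elements that keep the point `c • p i` inside the translate `c • P i`
  let V : ∀ i, H i → Set G := fun i c => {g | (f i c)⁻¹ * g * (f i c) * p i ∈ P i}
  have hVo : ∀ i c, IsOpen (V i c) := fun i c =>
    (hopen i).preimage (by fun_prop : Continuous fun g => (f i c)⁻¹ * g * (f i c) * p i)
  have hV1 : ∀ i c, (1 : G) ∈ V i c := fun i c => by
    show (f i c)⁻¹ * 1 * (f i c) * p i ∈ P i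
    simpa using hp i
  refine ⟨⋂ i, (V i 1 ∩ V i (a i) ∩ V i (b i)), isOpen_iInter_of_finite fun i =>
    ((hVo _ _).inter (hVo _ _)).inter (hVo _ _), Set.mem_iInter.2 fun i =>
    ⟨⟨hV1 _ _, hV1 _ _⟩, hV1 _ _⟩, ?_⟩
  intro w hw
  rw [Set.mem_iInter] at hw
  by_contra hw1
  obtain ⟨i, j, w', hw'⟩ := CoprodI.NeWord.of_word (CoprodI.Word.equiv w) (by
    intro h
    exact hw1 (by rw [← CoprodI.Word.equiv.symm_apply_apply w, h]; rfl))
  have hprod : w'.prod = w := by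
    have : w'.toWord.prod = w := by
      rw [hw']; exact CoprodI.Word.equiv.symm_apply_apply w
    exact this
  have hmain := neWord_pingPong f P hpp w'
  rw [hprod] at hmain
  have hhead := neWord_head_ne_one w'
  by_cases hij : i = j
  · subst hij
    have h1 := hpp i _ hhead _ (hmain (p i) (hp i))
    have h2 : (f i 1)⁻¹ * CoprodI.lift f w * (f i 1) * p i ∈ P i := (hw i).1.1
    simp only [map_one, inv_one, one_mul, mul_one] at h2
    have h3 : CoprodI.lift f w * p i ∈ P (!i) := by simpa [mul_assoc] using h1
    exact Set.disjoint_left.1 (hdisj i) h2 h3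
  · have hj : (!i) = j := by cases i <;> cases j <;> simp_all
    have key : ∀ c : H i, c ≠ 1 → CoprodI.lift f w ∈ V i c → w'.head = c := by
      intro c hc hcV
      by_contra hne
      have h1 := hpp i c hc _ (hp i)
      rw [hj] at h1
      have h2 := hmain _ h1
      have h3 := hpp i (w'.head⁻¹ * c) (fun h => hne (inv_mul_eq_one.1 h)) _ hcV
      have h4 : f i (w'.head⁻¹ * c) * ((f i c)⁻¹ * CoprodI.lift f w * (f i c) * p i) =
          (f i w'.head)⁻¹ * CoprodI.lift f w * (f i c * p i) := by
        simp only [map_mul, map_inv]; group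
      rw [h4] at h3
      exact Set.disjoint_left.1 (hdisj i) h2 h3
    exact hab i ((key _ (ha i) (hw i).1.2).symm.trans (key _ (hb i) (hw i).2))

/-! ### The two-arc configuration in `PSL₂(ℝ)` -/

instance : IsTopologicalGroup SL(2, ℝ) :=
  Matrix.SpecialLinearGroup.topologicalGroup

theorem mem_center_SL2 (Z : SL(2, ℝ)) (hZ : Z ∈ Subgroup.center SL(2, ℝ)) :
    Z = 1 ∨ Z = -1 := by
  obtain ⟨r, hr, h⟩ := Matrix.SpecialLinearGroup.mem_center_iff.1 hZ
  simp only [Fintype.card_fin] at hr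
  rcases sq_eq_one_iff.1 hr with h1 | h1
  all_goals subst h1
  · left; ext i j; rw [← h]; simp
  · right; ext i j; rw [← h]; fin_cases i <;> fin_cases j <;> simp

theorem mk_neg_one : (QuotientGroup.mk (-1 : SL(2, ℝ)) : PSL2R) = 1 := by
  rw [QuotientGroup.eq_one_iff, Subgroup.mem_center_iff]
  intro g; simp

/-- The quadratic form `q * (s * p - c * q)` at the first column `(p, q)` of a matrix. For
`c = cos (π / n)`, `s = sin (π / n)`, its sign tells on which side of `R∞ = c / s` the image
`p / q` of `∞` lies. -/
def colForm (c s : ℝ) (M : SL(2, ℝ)) : ℝ := M 1 0 * (s * M 0 0 - c * M 1 0)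

theorem colForm_continuous (c s : ℝ) : Continuous (colForm c s) := by
  have h : Continuous fun M : SL(2, ℝ) => (M : Matrix (Fin 2) (Fin 2) ℝ) :=
    continuous_induced_dom
  have h1 : ∀ i j, Continuous fun M : SL(2, ℝ) => M i j := fun i j =>
    (continuous_apply_apply i j).comp h
  have h2 := h1 0 0
  have h3 := h1 1 0
  unfold colForm
  fun_prop

/-- The form `colForm`, which is invariant under `M ↦ -M`, as a function on `PSL₂(ℝ)`. -/
def pslForm (c s : ℝ) : PSL2R → ℝ :=
  Quotient.lift (colForm c s) (by
    intro M N h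
    have h' : M⁻¹ * N ∈ Subgroup.center SL(2, ℝ) := QuotientGroup.leftRel_apply.1 h
    have hN : N = M * (M⁻¹ * N) := by group
    rcases mem_center_SL2 _ h' with h1 | h1
    · rw [h1] at hN; rw [hN]; simp
    · rw [h1] at hN; rw [hN]; simp [colForm]; ring)

theorem pslForm_mk (c s : ℝ) (M : SL(2, ℝ)) : pslForm c s (QuotientGroup.mk M) = colForm c s M :=
  rfl

theorem pslForm_continuous (c s : ℝ) : Continuous (pslForm c s) :=
  (colForm_continuous c s).quotient_lift _

theorem R_pow (θ : ℝ) (R : SL(2, ℝ)) (hR : (R : Matrix (Fin 2) (Fin 2) ℝ) =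
      !![cos θ, -sin θ; sin θ, cos θ]) (k : ℕ) :
    ((R ^ k : SL(2, ℝ)) : Matrix (Fin 2) (Fin 2) ℝ) =
      !![cos (k * θ), -sin (k * θ); sin (k * θ), cos (k * θ)] := by
  induction k with
  | zero => ext i j; fin_cases i <;> fin_cases j <;> simp
  | succ k ih =>
    rw [pow_succ, Matrix.SpecialLinearGroup.coe_mul, ih, hR]
    have h : ((k + 1 : ℕ) : ℝ) * θ = k * θ + θ := by push_cast; ring
    rw [h, cos_add, sin_add]
    ext i j; fin_cases i <;> fin_cases j <;> simp <;> ring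

/-- A nontrivial power of the rotation sends the arc between `∞` and `R∞` into the complementary
arc. -/
theorem R_pingPong (n : ℕ) (hn : 5 ≤ n) (R : SL(2, ℝ))
    (hR : (R : Matrix (Fin 2) (Fin 2) ℝ) =
      !![cos (π / n), -sin (π / n); sin (π / n), cos (π / n)])
    (k : ℕ) (hk : 1 ≤ k) (hkn : k < n) (M : SL(2, ℝ))
    (hM : 0 < colForm (cos (π / n)) (sin (π / n)) M) :
    colForm (cos (π / n)) (sin (π / n)) (R ^ k * M) < 0 := by
  have hn0 : (0 : ℝ) < n := by positivity
  set θ := π / n with hθ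
  have hnθ : n * θ = π := by rw [hθ]; field_simp
  have hθ0 : 0 < θ := by positivity
  have hsin : ∀ m : ℝ, 0 ≤ m → m ≤ n → 0 ≤ sin (m * θ) := fun m h0 h1 =>
    sin_nonneg_of_nonneg_of_le_pi (by positivity) (by rw [← hnθ]; gcongr)
  have hk1 : (1 : ℝ) ≤ k := by exact_mod_cast hk
  have hkn1 : (k : ℝ) + 1 ≤ n := by exact_mod_cast hkn
  have hD : 0 < sin (k * θ) :=
    sin_pos_of_pos_of_lt_pi (by positivity) (by rw [← hnθ]; gcongr)
  have hs : 0 < sin θ := sin_pos_of_pos_of_lt_pi hθ0 (by nlinarith)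
  have hE := hsin (k + 1) (by positivity) hkn1
  have hF := hsin (k - 1) (by linarith) (by linarith)
  have e1 : ((k : ℝ) + 1) * θ = k * θ + θ := by ring
  have e2 : ((k : ℝ) - 1) * θ = k * θ - θ := by ring
  rw [e1] at hE
  rw [e2] at hF
  unfold colForm at hM ⊢
  have m0 : (R ^ k * M) 0 0 = cos (k * θ) * M 0 0 - sin (k * θ) * M 1 0 := by
    rw [Matrix.SpecialLinearGroup.coe_mul, R_pow θ R hR]
    simp [Matrix.mul_apply, Fin.sum_univ_two]; ring
  have m1 : (R ^ k * M) 1 0 = sin (k * θ) * M 0 0 + cos (k * θ) * M 1 0 := by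
    rw [Matrix.SpecialLinearGroup.coe_mul, R_pow θ R hR]
    simp [Matrix.mul_apply, Fin.sum_univ_two]
  rw [m0, m1]
  set p := M 0 0
  set q := M 1 0
  set A := sin θ * p - cos θ * q with hA
  -- `A` and `q` are, up to the factor `sin θ`, the coordinates in the basis `e, R e`
  have i1 : sin θ * (sin (k * θ) * p + cos (k * θ) * q) =
      sin (k * θ) * A + sin (k * θ + θ) * q := by
    rw [sin_add, hA]; ring
  have i2 : sin θ * (sin θ * (cos (k * θ) * p - sin (k * θ) * q) -
      cos θ * (sin (k * θ) * p + cos (k * θ) * q)) =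
      -(sin (k * θ - θ) * A + sin (k * θ) * q) := by
    rw [sin_sub, hA]
    linear_combination (-(q * sin (k * θ))) * sin_sq_add_cos_sq θ
  have hpos : 0 < (sin (k * θ) * A + sin (k * θ + θ) * q) *
      (sin (k * θ - θ) * A + sin (k * θ) * q) := by
    have t1 : 0 < sin (k * θ) ^ 2 * (q * A) := by positivity
    have t2 : 0 ≤ sin (k * θ + θ) * sin (k * θ - θ) * (q * A) := by positivity
    have t3 : 0 ≤ sin (k * θ) * sin (k * θ - θ) * A ^ 2 := by positivity
    have t4 : 0 ≤ sin (k * θ) * sin (k * θ + θ) * q ^ 2 := by positivity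
    nlinarith
  rw [← neg_pos]
  refine pos_of_mul_pos_right (a := sin θ ^ 2) ?_ (by positivity)
  refine hpos.trans_eq ?_
  linear_combination (sin (k * θ - θ) * A + sin (k * θ) * q) * (-i1) +
    (-(sin θ * (sin (k * θ) * p + cos (k * θ) * q))) * (-i2)

/-- The action of `S = R T⁻¹` in the coordinates `(A, B)` with respect to the basis `e, R e`: here
`S e = R e` and `S² e = -√2 S e - e`, the trace of `S` being `-√2`. -/
theorem S_step (c s r t : ℝ) (hcs : s ^ 2 + c ^ 2 = 1) (ht : t * s = 2 * c + r)
    (S : SL(2, ℝ)) (hS : (S : Matrix (Fin 2) (Fin 2) ℝ) = !![c, -c * t - s; s, -s * t + c])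
    (M : SL(2, ℝ)) :
    (S * M) 1 0 = (s * M 0 0 - c * M 1 0) - r * M 1 0 ∧
    s * (S * M) 0 0 - c * (S * M) 1 0 = - M 1 0 := by
  rw [Matrix.SpecialLinearGroup.coe_mul, hS]
  simp only [Matrix.mul_apply, Fin.sum_univ_two]
  simp
  constructor
  · linear_combination (-(M 1 0)) * ht
  · linear_combination (-(M 1 0)) * hcs

/-- `S`, `S²` and `S³` send the outer arc into the arc between `∞` and `S∞ = R∞`. -/
theorem S_pingPong (c s r t : ℝ) (hcs : s ^ 2 + c ^ 2 = 1)
    (hr : 0 < r) (hr2 : r ^ 2 = 2) (ht : t * s = 2 * c + r)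
    (S : SL(2, ℝ)) (hS : (S : Matrix (Fin 2) (Fin 2) ℝ) = !![c, -c * t - s; s, -s * t + c])
    (k : ℕ) (hk : 1 ≤ k) (hk4 : k < 4) (M : SL(2, ℝ)) (hM : colForm c s M < 0) :
    0 < colForm c s (S ^ k * M) := by
  obtain ⟨b1, a1⟩ := S_step c s r t hcs ht S hS M
  obtain ⟨b2, a2⟩ := S_step c s r t hcs ht S hS (S * M)
  obtain ⟨b3, a3⟩ := S_step c s r t hcs ht S hS (S * (S * M))
  unfold colForm at hM ⊢
  set A := s * M 0 0 - c * M 1 0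
  set B := M 1 0
  have hA := sq_nonneg A
  have hB := sq_nonneg B
  have hrA : 0 ≤ r * A ^ 2 := by positivity
  have hrB : 0 ≤ r * B ^ 2 := by positivity
  rw [a1] at b2
  rw [b1] at a2 b2
  rw [a2] at b3
  rw [b2] at a3 b3
  interval_cases k
  · rw [pow_one, a1, b1]
    nlinarith
  · rw [pow_two, mul_assoc, a2, b2]
    have : (-B - r * (A - r * B)) * -(A - r * B) = r * A ^ 2 + r * B ^ 2 - 3 * (B * A) := by
      linear_combination (r * B ^ 2 - 2 * (B * A)) * hr2
    rw [this]; nlinarith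
  · have e : S ^ 3 * M = S * (S * (S * M)) := by simp only [pow_succ, pow_zero, one_mul, mul_assoc]
    rw [e, a3, b3]
    have : (-(A - r * B) - r * (-B - r * (A - r * B))) * -(-B - r * (A - r * B)) =
        r * A ^ 2 - B * A := by
      linear_combination (-(A * B) - (A - r * B) * (-B - r * (A - r * B))) * hr2
    rw [this]; nlinarith

theorem S_pow_four (r : ℝ) (hr2 : r ^ 2 = 2) (S : SL(2, ℝ))
    (hS : S 0 0 + S 1 1 = -r) : S ^ 4 = -1 := by
  have hdet := S.det_coe
  rw [Matrix.det_fin_two] at hdet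
  have h2 : ((S ^ 2 : SL(2, ℝ)) : Matrix (Fin 2) (Fin 2) ℝ) = (-r) • (S : Matrix (Fin 2) (Fin 2) ℝ) - 1 := by
    rw [pow_two, Matrix.SpecialLinearGroup.coe_mul, ← hS]
    ext i j
    fin_cases i <;> fin_cases j <;> simp [Matrix.mul_apply, Fin.sum_univ_two] <;>
      first | linear_combination -hdet | ring
  apply Subtype.ext
  have h4 : S ^ 4 = S ^ 2 * S ^ 2 := by rw [← pow_add]
  have h5 : (S : Matrix (Fin 2) (Fin 2) ℝ) * S = (-r) • (S : Matrix (Fin 2) (Fin 2) ℝ) - 1 := by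
    rw [← h2, pow_two, Matrix.SpecialLinearGroup.coe_mul]
  rw [h4, Matrix.SpecialLinearGroup.coe_mul, h2]
  have : ((-r) • (S : Matrix (Fin 2) (Fin 2) ℝ) - 1) * ((-r) • (S : Matrix (Fin 2) (Fin 2) ℝ) - 1)
    = (r ^ 2) • ((S : Matrix (Fin 2) (Fin 2) ℝ) * S) + (2 * r) • (S : Matrix (Fin 2) (Fin 2) ℝ) + 1 := by
    simp only [sub_mul, mul_sub, smul_mul_smul_comm, mul_one, one_mul]
    module
  rw [this, h5, hr2]
  have : (-1 : SL(2, ℝ)).1 = -(1 : Matrix (Fin 2) (Fin 2) ℝ) := by simp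
  rw [this]
  module

/-! ### Assembling the free product -/

/-- The two cyclic factors `ℤ/n` (at `true`) and `ℤ/4` (at `false`). -/
abbrev cyc (n : ℕ) (i : Bool) : Type := Multiplicative (ZMod (bif i then n else 4))

open Monoid in
/-- The indexed free product over `Bool` is the binary one. -/
def coprodEquiv (n : ℕ) :
    CoprodI (cyc n) ≃* Coprod (Multiplicative (ZMod n)) (Multiplicative (ZMod 4)) :=
  MonoidHom.toMulEquiv
    (CoprodI.lift (M := cyc n) fun i => match i with
      | true => Coprod.inl
      | false => Coprod.inr)
    (Coprod.lift (CoprodI.of (M := cyc n) (i := true)) (CoprodI.of (M := cyc n) (i := false)))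
    (by
      apply CoprodI.ext_hom
      intro i
      cases i <;> ext <;> simp)
    (by
      apply Coprod.hom_ext <;> ext <;> simp)

/-- Let `n ≥ 5` be odd (any odd n ≥ 5).  The images in `PSL₂(ℝ)` of the rotation `R`
by `π/n` and of the parabolic `T = [[1, 2(cos(π/n)+cos(π/4))/sin(π/n)], [0,1]]` generate a
discrete subgroup isomorphic to `ℤ/n ∗ ℤ/4`, i.e. the Fuchsian triangle group
`Δ(4, n, ∞)`. -/
theorem veech_ward_bouw_moeller_triangle_group_4_n_infty
    (n : ℕ) (hn : 5 ≤ n) (hodd : Odd n)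
    (R T : SL(2, ℝ))
    (hR : (R : Matrix (Fin 2) (Fin 2) ℝ) =
      !![Real.cos (π / n), -Real.sin (π / n); Real.sin (π / n), Real.cos (π / n)])
    (hT : (T : Matrix (Fin 2) (Fin 2) ℝ) =
      !![1, 2 * (Real.cos (π / n) + Real.cos (π / 4)) / Real.sin (π / n); 0, 1])
    (Γ : Subgroup PSL2R)
    (hΓ : Γ = Subgroup.closure {QuotientGroup.mk R, QuotientGroup.mk T}) :
    DiscreteTopology Γ ∧
      Nonempty (Γ ≃* Monoid.Coprod (Multiplicative (ZMod n)) (Multiplicative (ZMod 4))) := by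
  have hn0 : (0 : ℝ) < n := by positivity
  have : NeZero n := ⟨by omega⟩
  have hs : 0 < sin (π / n) := by
    apply sin_pos_of_pos_of_lt_pi (by positivity)
    apply div_lt_self pi_pos
    exact_mod_cast (by omega : 1 < n)
  set c := cos (π / n) with hc
  set s := sin (π / n) with hsd
  have hcs : s ^ 2 + c ^ 2 = 1 := sin_sq_add_cos_sq _
  set t := 2 * (c + cos (π / 4)) / s with htd
  have hr2 : (√2) ^ 2 = (2 : ℝ) := Real.sq_sqrt (by norm_num)
  have ht : t * s = 2 * c + √2 := by
    rw [htd, cos_pi_div_four]; field_simp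
  obtain ⟨S, hSd⟩ : ∃ S, S = R * T⁻¹ := ⟨_, rfl⟩
  have hS : (S : Matrix (Fin 2) (Fin 2) ℝ) = !![c, -c * t - s; s, -s * t + c] := by
    rw [hSd, Matrix.SpecialLinearGroup.coe_mul, Matrix.SpecialLinearGroup.coe_inv, hR, hT,
      Matrix.adjugate_fin_two]
    ext i j; fin_cases i <;> fin_cases j <;> simp <;> ring
  have hRn : (QuotientGroup.mk R : PSL2R) ^ n = 1 := by
    rw [← QuotientGroup.mk_pow, ← mk_neg_one]
    congr 1
    apply Subtype.ext
    rw [R_pow _ R hR]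
    have : (n : ℝ) * (π / n) = π := by field_simp
    rw [this]
    ext i j; fin_cases i <;> fin_cases j <;> simp
  have hS4 : (QuotientGroup.mk S : PSL2R) ^ 4 = 1 := by
    rw [← QuotientGroup.mk_pow, S_pow_four _ hr2 S, mk_neg_one]
    rw [hS]
    simp
    linear_combination -ht
  let f : ∀ i, cyc n i →* PSL2R := fun i => match i with
    | true => zmodPowHom n (QuotientGroup.mk R) hRn
    | false => zmodPowHom 4 (QuotientGroup.mk S) hS4
  let P : Bool → Set PSL2R := fun i => match i with
    | true => {g | 0 < pslForm c s g}
    | false => {g | pslForm c s g < 0}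
  have hlt : 2 < n := by omega
  obtain ⟨U, hUo, hU1, hU⟩ := pingPong_nhds f P
    (by
      have := pslForm_continuous c s
      rintro (_ | _)
      · exact isOpen_lt this continuous_const
      · exact isOpen_lt continuous_const this)
    (by
      rintro (_ | _)
      · obtain ⟨M, hM⟩ : ∃ M : SL(2, ℝ), (M : Matrix (Fin 2) (Fin 2) ℝ) =
            !![(c - 1) / s, -1; 1, 0] := ⟨⟨_, by simp⟩, rfl⟩
        refine ⟨QuotientGroup.mk M, ?_⟩
        show pslForm c s _ < 0
        rw [pslForm_mk]
        simp [colForm, hM]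
        field_simp
        linarith
      · obtain ⟨M, hM⟩ : ∃ M : SL(2, ℝ), (M : Matrix (Fin 2) (Fin 2) ℝ) =
            !![(c + 1) / s, -1; 1, 0] := ⟨⟨_, by simp⟩, rfl⟩
        refine ⟨QuotientGroup.mk M, ?_⟩
        show 0 < pslForm c s _
        rw [pslForm_mk]
        simp [colForm, hM]
        field_simp
        linarith)
    (by
      rintro (_ | _)
      · exact Set.disjoint_left.2 fun g (h1 : pslForm c s g < 0) (h2 : 0 < pslForm c s g) =>
          lt_asymm h1 h2
      · exact Set.disjoint_left.2 fun g (h1 : 0 < pslForm c s g) (h2 : pslForm c s g < 0) =>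
          lt_asymm h1 h2)
    (by
      rintro (_ | _) h hne g hg
      · induction g using QuotientGroup.induction_on with | H M => ?_
        obtain ⟨k, hk1, hk4, rfl⟩ := exists_natCast_of_ne_one (m := 4) h hne
        show 0 < pslForm c s (zmodPowHom 4 (QuotientGroup.mk S) hS4 _ * _)
        rw [zmodPowHom_natCast, ← QuotientGroup.mk_pow, ← QuotientGroup.mk_mul, pslForm_mk]
        exact S_pingPong c s _ t hcs (by positivity) hr2 ht S hS k hk1 hk4 M hg
      · induction g using QuotientGroup.induction_on with | H M => ?_
        obtain ⟨k, hk1, hk4, rfl⟩ := exists_natCast_of_ne_one (m := n) h hne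
        show pslForm c s (zmodPowHom n (QuotientGroup.mk R) hRn _ * _) < 0
        rw [zmodPowHom_natCast, ← QuotientGroup.mk_pow, ← QuotientGroup.mk_mul, pslForm_mk]
        exact R_pingPong n hn R hR k hk1 hk4 M hg)
    (fun i => Multiplicative.ofAdd ((1 : ℕ) : ZMod _))
    (fun i => Multiplicative.ofAdd ((2 : ℕ) : ZMod _))
    (by
      intro i h
      have h' : ((1 : ℕ) : ZMod (bif i then n else 4)) = 0 := h
      rw [ZMod.natCast_eq_zero_iff] at h'
      have := Nat.le_of_dvd (by norm_num) h'
      cases i <;> simp at this; omega)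
    (by
      intro i h
      have h' : ((2 : ℕ) : ZMod (bif i then n else 4)) = 0 := h
      rw [ZMod.natCast_eq_zero_iff] at h'
      have := Nat.le_of_dvd (by norm_num) h'
      cases i <;> simp at this; omega)
    (by
      intro i h
      have h' : ((1 : ℕ) : ZMod (bif i then n else 4)) = ((2 : ℕ) : ZMod _) := h
      rw [ZMod.natCast_eq_natCast_iff, Nat.modEq_iff_dvd] at h'
      have := Int.le_of_dvd (by norm_num) h'
      cases i <;> simp at this; omega)
  have hinj : Function.Injective (Monoid.CoprodI.lift f) :=
    (injective_iff_map_eq_one _).2 fun w hw => hU w (hw ▸ hU1)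
  have hfR : f true (Multiplicative.ofAdd ((1 : ℕ) : ZMod n)) = QuotientGroup.mk R := by
    show zmodPowHom n _ hRn _ = _
    rw [zmodPowHom_natCast, pow_one]
  have hfS : f false (Multiplicative.ofAdd ((1 : ℕ) : ZMod 4)) = QuotientGroup.mk S := by
    show zmodPowHom 4 _ hS4 _ = _
    rw [zmodPowHom_natCast, pow_one]
  have hrange : (Monoid.CoprodI.lift f).range = Γ := by
    rw [hΓ]
    apply le_antisymm
    · rw [Monoid.CoprodI.range_eq_iSup, iSup_le_iff]
      have hRm : (QuotientGroup.mk R : PSL2R) ∈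
          Subgroup.closure {(QuotientGroup.mk R : PSL2R), QuotientGroup.mk T} :=
        Subgroup.subset_closure (by simp)
      have hTm : (QuotientGroup.mk T : PSL2R) ∈
          Subgroup.closure {(QuotientGroup.mk R : PSL2R), QuotientGroup.mk T} :=
        Subgroup.subset_closure (by simp)
      rintro (_ | _) _ ⟨x, rfl⟩
      · by_cases hx : x = 1
        · rw [hx, map_one]; exact one_mem _
        obtain ⟨k, -, -, rfl⟩ := exists_natCast_of_ne_one (m := 4) x hx
        show zmodPowHom 4 (QuotientGroup.mk S) hS4 _ ∈ _
        rw [zmodPowHom_natCast, hSd, QuotientGroup.mk_mul, QuotientGroup.mk_inv]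
        exact pow_mem (mul_mem hRm (inv_mem hTm)) _
      · by_cases hx : x = 1
        · rw [hx, map_one]; exact one_mem _
        obtain ⟨k, -, -, rfl⟩ := exists_natCast_of_ne_one (m := n) x hx
        show zmodPowHom n (QuotientGroup.mk R) hRn _ ∈ _
        rw [zmodPowHom_natCast]
        exact pow_mem hRm _
    · rw [Subgroup.closure_le]
      have hRm : (QuotientGroup.mk R : PSL2R) ∈ (Monoid.CoprodI.lift f).range :=
        ⟨_, (Monoid.CoprodI.lift_of (i := true) f _).trans hfR⟩
      have hSm : (QuotientGroup.mk S : PSL2R) ∈ (Monoid.CoprodI.lift f).range :=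
        ⟨_, (Monoid.CoprodI.lift_of (i := false) f _).trans hfS⟩
      rintro _ (rfl | rfl)
      · exact hRm
      · have hTS : (QuotientGroup.mk T : PSL2R) =
            (QuotientGroup.mk S)⁻¹ * QuotientGroup.mk R := by
          rw [← QuotientGroup.mk_inv, ← QuotientGroup.mk_mul, hSd]
          congr 1; group
        rw [hTS]
        exact mul_mem (inv_mem hSm) hRm
  subst hrange
  refine ⟨?_, ⟨(MonoidHom.ofInjective hinj).symm.trans (coprodEquiv n)⟩⟩
  apply discreteTopology_of_isOpen_singleton_one
  have : ({1} : Set (Monoid.CoprodI.lift f).range) = Subtype.val ⁻¹' U := by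
    ext ⟨_, w, rfl⟩
    simp only [Set.mem_singleton_iff, Set.mem_preimage]
    constructor
    · intro h
      have h' : Monoid.CoprodI.lift f w = 1 := congrArg Subtype.val h
      rw [h']; exact hU1
    · intro h
      have hw := hU w h
      subst hw
      ext; simp
  rw [this]
  exact hUo.preimage continuous_subtype_val

end
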